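/- (Fatou lemma for the mixed-norm Herz norm.) Let n ∈ ℕ, p⃗, q⃗ ∈ (0,∞]^n and α⃗ ∈ ℝⁿ. If {f_k}_{k∈ℕ} is a sequence of nonnegative measurable functions on ℝⁿ, then ‖ liminf_{k→∞} f_k ‖_{Ė^{α⃗,p⃗}_{q⃗}(ℝⁿ)} ≤ liminf_{k→∞} ‖f_k‖_{Ė^{α⃗,p⃗}_{q⃗}(ℝⁿ)}. -/

import Mathlib

open MeasureTheory ENNReal Filter

noncomputable section

/-- The dyadic annulus `R_k = (-2^k, 2^k) \ (-2^(k-1), 2^(k-1))` in `ℝ`. -/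
def herzRing (k : ℤ) : Set ℝ :=
  Set.Ioo (-(2 : ℝ) ^ k) ((2 : ℝ) ^ k) \ Set.Ioo (-(2 : ℝ) ^ (k - 1)) ((2 : ℝ) ^ (k - 1))

/-- The `L^q` "norm" (valued in `ℝ≥0∞`) of an `ℝ≥0∞`-valued function on a set `s ⊆ ℝ`,
with the usual modification when `q = ∞`. -/
def lqNormOn (q : ℝ≥0∞) (s : Set ℝ) (g : ℝ → ℝ≥0∞) : ℝ≥0∞ :=
  if q = ∞ then essSup (s.indicator g) volume
  else (∫⁻ x in s, g x ^ q.toReal) ^ (1 / q.toReal)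

/-- The `l^p` norm over `ℤ` of an `ℝ≥0∞`-valued sequence, with the usual modification
when `p = ∞`. -/
def lpZNorm (p : ℝ≥0∞) (a : ℤ → ℝ≥0∞) : ℝ≥0∞ :=
  if p = ∞ then ⨆ k, a k
  else (∑' k : ℤ, a k ^ p.toReal) ^ (1 / p.toReal)

/-- The one-dimensional Herz norm `K^{α,p}_q` of an `ℝ≥0∞`-valued function on `ℝ`. -/
def herzNorm1 (α : ℝ) (p q : ℝ≥0∞) (g : ℝ → ℝ≥0∞) : ℝ≥0∞ :=
  lpZNorm p fun k => ENNReal.ofReal ((2 : ℝ) ^ ((k : ℝ) * α)) * lqNormOn q (herzRing k) g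

/-- The mixed-norm Herz norm on `ℝⁿ` of an `ℝ≥0∞`-valued function: the Herz norm
`K^{α_1,p_1}_{q_1}` is applied in the first variable, then `K^{α_2,p_2}_{q_2}` in the
second variable, …, and finally `K^{α_n,p_n}_{q_n}` in the last variable. -/
def mixedHerzNormE : (n : ℕ) → (Fin n → ℝ) → (Fin n → ℝ≥0∞) → (Fin n → ℝ≥0∞) →
    ((Fin n → ℝ) → ℝ≥0∞) → ℝ≥0∞
  | 0, _, _, _, f => f fun i => i.elim0
  | n + 1, α, p, q, f =>
    herzNorm1 (α (Fin.last n)) (p (Fin.last n)) (q (Fin.last n)) fun xlast =>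
      mixedHerzNormE n (Fin.init α) (Fin.init p) (Fin.init q) fun y => f (Fin.snoc y xlast)

/-- The mixed-norm Herz norm `‖f‖_{Ė^{α,p}_q(ℝⁿ)}` of a complex-valued function on `ℝⁿ`. -/
def herzNormC (n : ℕ) (α : Fin n → ℝ) (p q : Fin n → ℝ≥0∞) (f : (Fin n → ℝ) → ℂ) : ℝ≥0∞ :=
  mixedHerzNormE n α p q fun x => (‖f x‖₊ : ℝ≥0∞)

/-- `I_m = (-2^m, -2^{-m}] ∪ [2^{-m}, 2^m)`. -/
def herzI (m : ℕ) : Set ℝ :=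
  Set.Ioc (-(2 : ℝ) ^ (m : ℤ)) (-(2 : ℝ) ^ (-(m : ℤ))) ∪
    Set.Ico ((2 : ℝ) ^ (-(m : ℤ))) ((2 : ℝ) ^ (m : ℤ))

/-- `A_m = I_m^n ⊆ ℝⁿ`. -/
def herzA (n m : ℕ) : Set (Fin n → ℝ) := Set.univ.pi fun _ => herzI m

/-- The class `H(ℝⁿ)` of simple functions built from finitely many pairwise disjoint
parallelepipeds contained in some `A_m`. -/
def IsHSimple (n : ℕ) (f : (Fin n → ℝ) → ℂ) : Prop :=
  ∃ (m N : ℕ) (a : Fin N → ℂ) (E : Fin N → Fin n → Set ℝ),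
    (∀ k i, MeasurableSet (E k i)) ∧
    (∀ k, Set.univ.pi (E k) ⊆ herzA n m) ∧
    (Pairwise fun k l => Disjoint (Set.univ.pi (E k)) (Set.univ.pi (E l))) ∧
    f = fun x => ∑ k, (Set.univ.pi (E k)).indicator (fun _ => a k) x

/-- The Euclidean ball `B(x,r)` in `ℝⁿ`. -/
def eucBall (n : ℕ) (x : Fin n → ℝ) (r : ℝ) : Set (Fin n → ℝ) :=
  {y | ∑ i, (y i - x i) ^ 2 < r ^ 2}

/-- The (uncentered) maximal operator in the `k`-th variable. -/
def maxVar (n : ℕ) (k : Fin n) (g : (Fin n → ℝ) → ℝ≥0∞) : (Fin n → ℝ) → ℝ≥0∞ :=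
  fun x => ⨆ (a : ℝ) (b : ℝ) (_ : x k ∈ Set.Ioo a b),
    (volume (Set.Ioo a b))⁻¹ * ∫⁻ y in Set.Ioo a b, g (Function.update x k y)

/-- The centered Hardy–Littlewood maximal operator on `ℝⁿ`. -/
def centeredMax (n : ℕ) (g : (Fin n → ℝ) → ℝ≥0∞) : (Fin n → ℝ) → ℝ≥0∞ :=
  fun x => ⨆ (r : ℝ) (_ : 0 < r),
    (volume (eucBall n x r))⁻¹ * ∫⁻ y in eucBall n x r, g y

/-- The composition `M_n ∘ ⋯ ∘ M_1` of the maximal operators in each variable. -/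
def iteratedMax (n : ℕ) (g : (Fin n → ℝ) → ℝ≥0∞) : (Fin n → ℝ) → ℝ≥0∞ :=
  (List.ofFn fun k : Fin n => maxVar n k).foldl (fun h F => F h) g

/-- The iterated maximal operator `ℳ_t(f) = [M_n ⋯ M_1(|f|^t)]^{1/t}`. -/
def iterMaxPow (n : ℕ) (t : ℝ) (f : (Fin n → ℝ) → ℂ) : (Fin n → ℝ) → ℝ≥0∞ :=
  fun x => iteratedMax n (fun y => (‖f y‖₊ : ℝ≥0∞) ^ t) x ^ (1 / t)

/-- The `l^r`-Herz type mixed norm of a sequence of functions on `ℝⁿ`. -/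
def herzSeqNorm (n : ℕ) (r : ℝ≥0∞) (α : Fin n → ℝ) (p q : Fin n → ℝ≥0∞)
    (F : ℤ → (Fin n → ℝ) → ℂ) : ℝ≥0∞ :=
  mixedHerzNormE n α p q fun x => lpZNorm r fun j => (‖F j x‖₊ : ℝ≥0∞)

/-- `N` is a ball quasi-Banach function norm on (nonnegative extended-real-valued)
measurable functions on `ℝⁿ`. -/
def IsBQBFNorm (n : ℕ) (N : ((Fin n → ℝ) → ℝ≥0∞) → ℝ≥0∞) : Prop :=
  (∀ f : (Fin n → ℝ) → ℝ≥0∞, Measurable f → N f = 0 → f =ᵐ[volume] 0) ∧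
  (∀ f g : (Fin n → ℝ) → ℝ≥0∞, Measurable f → Measurable g →
    (∀ᵐ x ∂volume, g x ≤ f x) → N g ≤ N f) ∧
  (∀ (fm : ℕ → (Fin n → ℝ) → ℝ≥0∞) (f : (Fin n → ℝ) → ℝ≥0∞),
    (∀ m, Measurable (fm m)) → Measurable f →
    (∀ᵐ x ∂volume, Monotone (fun m => fm m x) ∧
      Tendsto (fun m => fm m x) atTop (nhds (f x))) →
    Monotone (fun m => N (fm m)) ∧ Tendsto (fun m => N (fm m)) atTop (nhds (N f))) ∧
  (∀ (x : Fin n → ℝ) (r : ℝ), 0 < r →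
    N ((eucBall n x r).indicator fun _ => (1 : ℝ≥0∞)) ≠ ∞)

/-- `N` is a ball Banach function norm: a ball quasi-Banach function norm that moreover
satisfies the triangle inequality and locally dominates the `L¹` norm. -/
def IsBallBanachNorm (n : ℕ) (N : ((Fin n → ℝ) → ℝ≥0∞) → ℝ≥0∞) : Prop :=
  IsBQBFNorm n N ∧
  (∀ f g : (Fin n → ℝ) → ℝ≥0∞, Measurable f → Measurable g → N (f + g) ≤ N f + N g) ∧
  (∀ (x : Fin n → ℝ) (r : ℝ), 0 < r → ∃ C : ℝ≥0∞, 0 < C ∧ C ≠ ∞ ∧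
    ∀ f : (Fin n → ℝ) → ℝ≥0∞, Measurable f → (∫⁻ y in eucBall n x r, f y) ≤ C * N f)

/-- The associate (Köthe dual) norm of a function norm `N`. -/
def assocNormOf (n : ℕ) (N : ((Fin n → ℝ) → ℝ≥0∞) → ℝ≥0∞)
    (f : (Fin n → ℝ) → ℝ≥0∞) : ℝ≥0∞ :=
  ⨆ (g : (Fin n → ℝ) → ℝ≥0∞) (_ : Measurable g) (_ : N g = 1), ∫⁻ x, f x * g x

/-- The `θ`-convexification of a function norm: `‖f‖_{X^θ} = ‖|f|^θ‖_X^{1/θ}`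
(here stated with `θ` in place of `1/p`, so `X^{1/p}` is `convexPow n (1/p) N`). -/
def convexPow (n : ℕ) (θ : ℝ) (N : ((Fin n → ℝ) → ℝ≥0∞) → ℝ≥0∞)
    (f : (Fin n → ℝ) → ℝ≥0∞) : ℝ≥0∞ :=
  N (fun x => f x ^ θ) ^ (1 / θ)

/-- The associate space norm of the mixed-norm Herz space, for complex-valued functions. -/
def herzAssocNormC (n : ℕ) (α : Fin n → ℝ) (p q : Fin n → ℝ≥0∞)
    (f : (Fin n → ℝ) → ℂ) : ℝ≥0∞ :=
  ⨆ (g : (Fin n → ℝ) → ℂ) (_ : Measurable g) (_ : herzNormC n α p q g = 1),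
    ∫⁻ x, (‖f x * g x‖₊ : ℝ≥0∞)

/-!
For positive exponents the one-dimensional Herz norm is an `L^p` norm over counting measure on `ℤ`
of weighted `L^q` norms over the annuli, so it inherits Fatou's lemma from two applications of
Fatou's lemma for `eLpNorm`. The mixed norm is treated by induction on the dimension, peeling off
the last variable: the inductive hypothesis gives Fatou slice by slice, and Fatou in the last
variable then applies because the inner mixed norm depends measurably on that variable
(Tonelli for finite exponents, measurability of parametrised essential suprema for `∞`).
-/

section EssSup

variable {X Y β : Type*} [MeasurableSpace X] [MeasurableSpace Y] [CompleteLinearOrder β]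
  [TopologicalSpace β] [OrderTopology β]

theorem essSup_le_iff_ae_le [FirstCountableTopology β] {μ : Measure X} {f : X → β} {c : β} :
    essSup f μ ≤ c ↔ ∀ᵐ x ∂μ, f x ≤ c :=
  ⟨fun h => (_root_.ae_le_essSup (f := f)).mono fun _ hx => hx.trans h, essSup_le_of_ae_le c⟩

theorem measurable_essSup_prod_right [SecondCountableTopology β] [MeasurableSpace β]
    [BorelSpace β] {ν : Measure Y} [SFinite ν] {f : X → Y → β}
    (hf : Measurable (Function.uncurry f)) : Measurable fun x => essSup (f x) ν := by
  refine measurable_of_Iic fun c => ?_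
  have sublevel_eq : (fun x => essSup (f x) ν) ⁻¹' Set.Iic c =
      (fun x => ν (Prod.mk x ⁻¹' {z | c < Function.uncurry f z})) ⁻¹' {0} := by
    ext x
    simp [essSup_le_iff_ae_le, ae_iff]
  rw [sublevel_eq]
  exact measurable_measure_prodMk_left (measurableSet_lt measurable_const hf)
    (measurableSet_singleton 0)

end EssSup

section LpNorm

variable {X Y ι : Type*} [MeasurableSpace X] [MeasurableSpace Y]

theorem essSup_liminf_le_liminf_essSup {μ : Measure X} {F : Filter ι} [F.IsCountablyGenerated]
    (f : ι → X → ℝ≥0∞) :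
    essSup (fun x => liminf (fun i => f i x) F) μ ≤ liminf (fun i => essSup (f i) μ) F := by
  obtain rfl | _ := F.eq_or_neBot
  · simp
  obtain ⟨u, hu_lim, hu⟩ := exists_seq_tendsto_liminf (f := F) (u := fun i => essSup (f i) μ)
  calc essSup (fun x => liminf (fun i => f i x) F) μ
      ≤ essSup (fun x => liminf (fun n => f (u n) x) atTop) μ :=
        essSup_mono_ae (.of_forall fun x => hu.liminf_le_liminf_comp)
    _ ≤ liminf (fun n => essSup (f (u n)) μ) atTop := ENNReal.essSup_liminf_le _
    _ = liminf (fun i => essSup (f i) μ) F := hu_lim.liminf_eq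

theorem liminf_ennreal_rpow {r : ℝ} (hr : 0 < r) (F : Filter ι) (u : ι → ℝ≥0∞) :
    liminf (fun i => u i ^ r) F = liminf u F ^ r :=
  (OrderIso.liminf_apply (ENNReal.orderIsoRpow r hr)).symm

theorem const_mul_liminf_ennreal_le {c : ℝ≥0∞} (hc : c ≠ ∞) (F : Filter ι) (u : ι → ℝ≥0∞) :
    c * liminf u F ≤ liminf (fun i => c * u i) F := by
  obtain rfl | _ := F.eq_or_neBot
  · simp
  · exact (ENNReal.liminf_const_mul_of_ne_top hc).ge

theorem eLpNorm_liminf_le {p : ℝ≥0∞} {μ : Measure X} {F : Filter ι} [F.IsCountablyGenerated]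
    {f : ι → X → ℝ≥0∞} (hf : ∀ i, AEMeasurable (f i) μ) :
    eLpNorm (fun x => liminf (fun i => f i x) F) p μ ≤ liminf (fun i => eLpNorm (f i) p μ) F := by
  obtain rfl | hp := eq_or_ne p 0
  · simp
  obtain rfl | hp' := eq_or_ne p ∞
  · simpa only [eLpNorm_exponent_top, eLpNormEssSup, enorm_eq_self]
      using essSup_liminf_le_liminf_essSup f
  have hr : 0 < p.toReal := ENNReal.toReal_pos hp hp'
  simp only [eLpNorm_eq_lintegral_rpow_enorm_toReal hp hp', enorm_eq_self]
  rw [liminf_ennreal_rpow (one_div_pos.2 hr)]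
  gcongr
  simp only [← liminf_ennreal_rpow hr]
  exact lintegral_liminf_le' fun i => (hf i).pow_const _

theorem measurable_eLpNorm_prod_right {p : ℝ≥0∞} {ν : Measure Y} [SFinite ν]
    {f : X → Y → ℝ≥0∞} (hf : Measurable (Function.uncurry f)) :
    Measurable fun x => eLpNorm (f x) p ν := by
  obtain rfl | hp := eq_or_ne p 0
  · simp
  obtain rfl | hp' := eq_or_ne p ∞
  · simpa only [eLpNorm_exponent_top, eLpNormEssSup, enorm_eq_self]
      using measurable_essSup_prod_right hf
  simp only [eLpNorm_eq_lintegral_rpow_enorm_toReal hp hp', enorm_eq_self]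
  exact (hf.pow_const _).lintegral_prod_right.pow_const _

end LpNorm

section HerzNorm

theorem measurableSet_herzRing (k : ℤ) : MeasurableSet (herzRing k) :=
  measurableSet_Ioo.diff measurableSet_Ioo

theorem lqNormOn_eq_eLpNorm {q : ℝ≥0∞} (hq : q ≠ 0) {s : Set ℝ} (hs : MeasurableSet s)
    (g : ℝ → ℝ≥0∞) : lqNormOn q s g = eLpNorm g q (volume.restrict s) := by
  unfold lqNormOn
  split_ifs with hq'
  · rw [hq', eLpNorm_exponent_top, ENNReal.essSup_indicator_eq_essSup_restrict hs]
    rfl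
  · simp only [eLpNorm_eq_lintegral_rpow_enorm_toReal hq hq', enorm_eq_self]

theorem lpZNorm_eq_eLpNorm_count {p : ℝ≥0∞} (hp : p ≠ 0) (a : ℤ → ℝ≥0∞) :
    lpZNorm p a = eLpNorm a p Measure.count := by
  unfold lpZNorm
  split_ifs with hp'
  · rw [hp', eLpNorm_exponent_top, eLpNormEssSup, essSup_count]
    rfl
  · simp only [eLpNorm_eq_lintegral_rpow_enorm_toReal hp hp', enorm_eq_self, lintegral_count]

variable {X ι : Type*} [MeasurableSpace X] {α : ℝ} {p q : ℝ≥0∞}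

theorem herzNorm1_eq_eLpNorm (hp : p ≠ 0) (hq : q ≠ 0) (g : ℝ → ℝ≥0∞) :
    herzNorm1 α p q g = eLpNorm (fun k : ℤ => ENNReal.ofReal ((2 : ℝ) ^ ((k : ℝ) * α)) *
      eLpNorm g q (volume.restrict (herzRing k))) p Measure.count := by
  simp only [herzNorm1, lpZNorm_eq_eLpNorm_count hp,
    lqNormOn_eq_eLpNorm hq (measurableSet_herzRing _)]

theorem herzNorm1_mono (hp : p ≠ 0) (hq : q ≠ 0) : Monotone (herzNorm1 α p q) := by
  intro g h hgh
  simp only [herzNorm1_eq_eLpNorm hp hq]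
  exact eLpNorm_mono_enorm fun k => mul_le_mul_right (eLpNorm_mono_enorm hgh) _

theorem herzNorm1_liminf_le (hp : p ≠ 0) (hq : q ≠ 0) {F : Filter ι} [F.IsCountablyGenerated]
    {g : ι → ℝ → ℝ≥0∞} (hg : ∀ i, Measurable (g i)) :
    herzNorm1 α p q (fun t => liminf (fun i => g i t) F) ≤
      liminf (fun i => herzNorm1 α p q (g i)) F := by
  set w : ℤ → ℝ≥0∞ := fun k => ENNReal.ofReal ((2 : ℝ) ^ ((k : ℝ) * α))
  set N : ℤ → (ℝ → ℝ≥0∞) → ℝ≥0∞ := fun k h => eLpNorm h q (volume.restrict (herzRing k))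
  have weighted_fatou (k : ℤ) :
      w k * N k (fun t => liminf (fun i => g i t) F) ≤ liminf (fun i => w k * N k (g i)) F :=
    calc w k * N k (fun t => liminf (fun i => g i t) F)
        ≤ w k * liminf (fun i => N k (g i)) F := by
          gcongr
          exact eLpNorm_liminf_le fun i => (hg i).aemeasurable
      _ ≤ liminf (fun i => w k * N k (g i)) F :=
          const_mul_liminf_ennreal_le ENNReal.ofReal_ne_top F _
  simp only [herzNorm1_eq_eLpNorm hp hq]
  calc eLpNorm (fun k => w k * N k fun t => liminf (fun i => g i t) F) p Measure.count
      ≤ eLpNorm (fun k => liminf (fun i => w k * N k (g i)) F) p Measure.count :=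
        eLpNorm_mono_enorm weighted_fatou
    _ ≤ liminf (fun i => eLpNorm (fun k => w k * N k (g i)) p Measure.count) F :=
        eLpNorm_liminf_le fun i => .of_discrete

theorem measurable_herzNorm1 (hp : p ≠ 0) (hq : q ≠ 0) {g : X → ℝ → ℝ≥0∞}
    (hg : Measurable (Function.uncurry g)) : Measurable fun x => herzNorm1 α p q (g x) := by
  simp only [herzNorm1_eq_eLpNorm hp hq]
  have annulus_measurable (k : ℤ) :
      Measurable fun x => eLpNorm (g x) q (volume.restrict (herzRing k)) :=
    measurable_eLpNorm_prod_right hg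
  refine measurable_eLpNorm_prod_right (measurable_from_prod_countable_left fun k => ?_)
  simpa only [Function.uncurry_apply_pair] using (annulus_measurable k).const_mul _

end HerzNorm

section MixedHerzNorm

theorem measurable_finSnoc {n : ℕ} {A : Fin (n + 1) → Type*} [∀ i, MeasurableSpace (A i)]
    {X : Type*} [MeasurableSpace X] {f : X → ∀ i : Fin n, A i.castSucc} {g : X → A (Fin.last n)}
    (hf : Measurable f) (hg : Measurable g) :
    Measurable fun x => (Fin.snoc (f x) (g x) : ∀ i, A i) := by
  refine measurable_pi_lambda _ (Fin.lastCases ?_ fun i => ?_)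
  · simpa only [Fin.snoc_last] using hg
  · simpa only [Fin.snoc_castSucc] using measurable_pi_iff.1 hf i

theorem measurable_mixedHerzNormE {X : Type*} [MeasurableSpace X] {n : ℕ} {α : Fin n → ℝ}
    {p q : Fin n → ℝ≥0∞} (hp : ∀ i, p i ≠ 0) (hq : ∀ i, q i ≠ 0) {f : X → (Fin n → ℝ) → ℝ≥0∞}
    (hf : Measurable (Function.uncurry f)) : Measurable fun x => mixedHerzNormE n α p q (f x) := by
  induction n generalizing X with
  | zero => exact hf.comp measurable_prodMk_right
  | succ n ih =>
    refine measurable_herzNorm1 (hp _) (hq _) ?_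
    refine ih (X := X × ℝ) (fun i => hp _) (fun i => hq _)
      (f := fun z y => f z.1 (Fin.snoc y z.2)) ?_
    exact hf.comp <| (measurable_fst.comp measurable_fst).prodMk <|
      measurable_finSnoc measurable_snd (measurable_snd.comp measurable_fst)

theorem mixedHerz_fatou_general {ι : Type*} {F : Filter ι} [F.IsCountablyGenerated] {n : ℕ}
    {p q : Fin n → ℝ≥0∞} {α : Fin n → ℝ} (hp : ∀ i, p i ≠ 0) (hq : ∀ i, q i ≠ 0)
    {f : ι → (Fin n → ℝ) → ℝ≥0∞} (hf : ∀ i, Measurable (f i)) :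
    mixedHerzNormE n α p q (fun x => liminf (fun i => f i x) F) ≤
      liminf (fun i => mixedHerzNormE n α p q (f i)) F := by
  induction n with
  | zero => exact le_rfl
  | succ n ih =>
    set N : ((Fin n → ℝ) → ℝ≥0∞) → ℝ≥0∞ := mixedHerzNormE n (Fin.init α) (Fin.init p) (Fin.init q)
    have slice_measurable (i : ι) : Measurable fun z : ℝ × (Fin n → ℝ) => f i (Fin.snoc z.2 z.1) :=
      (hf i).comp (measurable_finSnoc measurable_snd measurable_fst)
    have slice_fatou (t : ℝ) : N (fun y => liminf (fun i => f i (Fin.snoc y t)) F) ≤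
        liminf (fun i => N fun y => f i (Fin.snoc y t)) F :=
      ih (fun i => hp _) (fun i => hq _) fun i => (slice_measurable i).comp measurable_prodMk_left
    calc herzNorm1 (α (Fin.last n)) (p (Fin.last n)) (q (Fin.last n))
          (fun t => N fun y => liminf (fun i => f i (Fin.snoc y t)) F)
        ≤ herzNorm1 (α (Fin.last n)) (p (Fin.last n)) (q (Fin.last n))
          (fun t => liminf (fun i => N fun y => f i (Fin.snoc y t)) F) :=
          herzNorm1_mono (hp _) (hq _) slice_fatou
      _ ≤ liminf (fun i => herzNorm1 (α (Fin.last n)) (p (Fin.last n)) (q (Fin.last n))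
          fun t => N fun y => f i (Fin.snoc y t)) F :=
          herzNorm1_liminf_le (hp _) (hq _) fun i =>
            measurable_mixedHerzNormE (fun i => hp _) (fun i => hq _) (slice_measurable i)

end MixedHerzNorm

/-- the Fatou lemma for the mixed-norm Herz norm. -/
theorem mixedHerz_fatou (n : ℕ) (p q : Fin n → ℝ≥0∞) (α : Fin n → ℝ)
    (hp : ∀ i, 0 < p i) (hq : ∀ i, 0 < q i)
    (f : ℕ → (Fin n → ℝ) → ℝ≥0∞) (hf : ∀ k, Measurable (f k)) :
    mixedHerzNormE n α p q (fun x => Filter.liminf (fun k => f k x) Filter.atTop) ≤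
      Filter.liminf (fun k => mixedHerzNormE n α p q (f k)) Filter.atTop :=
  mixedHerz_fatou_general (fun i => (hp i).ne') (fun i => (hq i).ne') hf
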